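/- arXiv:1812.08470 — 2 statements merged into one kernel-verified Lean document; each statement's English description precedes it below -/
import Mathlib

section
/- Let 𝕊 ⊆ ℝ^ℓ (ℓ ≥ 2) be a state space which is a (hyper)-ellipsoid, let n ∈ ℕ, and let X ⊆ ℝⁿ be nonempty and bounded with d := dim aff(X) ≤ ℓ − 1. Then ddi(X | 𝕊) is a singleton {E}, where E is a d-dimensional ellipsoid in ℝⁿ satisfying X ⊆ E ⊆ aff(X), and every d-dimensional ellipsoid E′ in ℝⁿ with X ⊆ E′ ⊆ aff(X) has d-dimensional Hausdorff measure at least that of E (i.e., E is the minimum-volume enclosing ellipsoid of X inside aff(X)). -/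
open MeasureTheory Metric Set

noncomputable section

/-- `Euc n` is the Euclidean space `ℝⁿ`. -/
abbrev Euc (n : ℕ) : Type := EuclideanSpace ℝ (Fin n)

/-- A state space of linear dimension `ℓ`: a compact convex set contained in (and affinely
spanning) an affine hyperplane not through the origin, here written as `{x | f x = 1}`
for a nonzero linear functional `f`. -/
def IsStateSpace {ℓ : ℕ} (𝕊 : Set (Euc ℓ)) : Prop :=
  IsCompact 𝕊 ∧ Convex ℝ 𝕊 ∧
    ∃ f : Euc ℓ →ₗ[ℝ] ℝ, f ≠ 0 ∧
      (affineSpan ℝ 𝕊 : Set (Euc ℓ)) = {x | f x = 1}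

/-- `R` is admissible for the data set `X` (w.r.t. the state space `𝕊`): it is the image of `𝕊`
under some linear map and satisfies `X ⊆ R ⊆ aff X`. -/
def Admissible {ℓ n : ℕ} (𝕊 : Set (Euc ℓ)) (X R : Set (Euc n)) : Prop :=
  (∃ M : Euc ℓ →ₗ[ℝ] Euc n, R = M '' 𝕊) ∧ X ⊆ R ∧ R ⊆ (affineSpan ℝ X : Set (Euc n))

/-- Data-driven inference: the admissible sets for `X` of minimal `d`-dimensional Hausdorff
measure, where `d = dim aff X`. -/
def ddi {ℓ n : ℕ} (X : Set (Euc n)) (𝕊 : Set (Euc ℓ)) : Set (Set (Euc n)) :=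
  {R | Admissible 𝕊 X R ∧ ∀ R' : Set (Euc n), Admissible 𝕊 X R' →
      μH[(Module.finrank ℝ (affineSpan ℝ X).direction : ℝ)] R ≤
        μH[(Module.finrank ℝ (affineSpan ℝ X).direction : ℝ)] R'}

/-- A (hyper)-ellipsoid state space in `ℝ^ℓ`: the image of the closed unit ball of `ℝ^(ℓ-1)`
under an injective affine map. -/
def IsHyperEllipsoid {ℓ : ℕ} (𝕊 : Set (Euc ℓ)) : Prop :=
  ∃ F : Euc (ℓ - 1) →ᵃ[ℝ] Euc ℓ, Function.Injective F ∧ 𝕊 = F '' closedBall 0 1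

/-- A `d`-dimensional ellipsoid in `ℝⁿ`: the image of the closed unit ball of `ℝ^d` under an
injective affine map. -/
def IsEllipsoidOfDim (d : ℕ) {n : ℕ} (E : Set (Euc n)) : Prop :=
  ∃ F : Euc d →ᵃ[ℝ] Euc n, Function.Injective F ∧ E = F '' closedBall 0 1

/-!
Fix isometric coordinates on `aff X`. Full-dimensional ellipsoids are the sets `{x | ‖g x‖ ≤ 1}` for
invertible affine maps `g`, with volume proportional to `|det g|⁻¹`, so a smallest ellipsoid
containing `X` comes from a `g` maximising `|det|` subject to the convex constraint `‖g‖ ≤ 1` on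
`X`; the admissible maps form a compact set because `X` affinely spans the space.

For uniqueness, change coordinates so that one maximiser is the identity, and let `U` be the
orthogonal polar factor of the linear part of another one, `k`. The midpoint of `U` and `k` is again
a competitor, and `s ≤ ((1 + s) / 2) ^ 2` for the singular values `s` forces the linear part of `k`
to be `U`. Uniform convexity of the norm then rules out a translation part, so `k` is an isometry
fixing `0`.

Admissible sets are exactly the full-dimensional ellipsoids between `X` and `aff X`: an affine map
on the hyperplane of the state space extends to a linear map, and every affine image of a ball is an
ellipsoid in its affine span, since the map factors through the orthogonal projection along its
kernel.
-/

section VolumeExpansion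

variable {W : Type*} [NormedAddCommGroup W] [InnerProductSpace ℝ W]

lemma abs_det_eq_prod_of_orthonormalBasis {ι : Type*} [Fintype ι] (v u : OrthonormalBasis ι ℝ W)
    {s : ι → ℝ} {K : W →ₗ[ℝ] W} (hK : ∀ i, K (v i) = s i • u i) :
    |LinearMap.det K| = |∏ i, s i| := by
  classical
  have hdet : LinearMap.det K = (∏ i, s i) * v.toBasis.det u := by
    calc LinearMap.det K = LinearMap.det K * v.toBasis.det v.toBasis := by
          rw [v.toBasis.det_self, mul_one]
      _ = v.toBasis.det fun i => s i • u i := by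
          rw [← Module.Basis.det_comp]
          simp only [Function.comp_def, v.coe_toBasis, hK]
      _ = (∏ i, s i) * v.toBasis.det u := by
          rw [AlternatingMap.map_smul_univ, smul_eq_mul]
  obtain h | h := v.det_to_matrix_orthonormalBasis_real u <;> simp [hdet, h]

variable [FiniteDimensional ℝ W]

/-- Singular value decomposition; `v` diagonalises `K* K`. -/
lemma exists_orthonormalBasis_map_eq_smul {K : W →ₗ[ℝ] W} (hK : Function.Injective K) :
    ∃ (v u : OrthonormalBasis (Fin (Module.finrank ℝ W)) ℝ W)
      (s : Fin (Module.finrank ℝ W) → ℝ), (∀ i, 0 < s i) ∧ ∀ i, K (v i) = s i • u i := by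
  have hsym := LinearMap.isSymmetric_adjoint_mul_self K
  let v := hsym.eigenvectorBasis rfl
  have hpos (i) : 0 < ‖K (v i)‖ :=
    norm_pos_iff.2 ((map_ne_zero_iff K hK).2 (v.orthonormal.ne_zero i))
  have horth {i j} (hij : i ≠ j) : inner ℝ (K (v i)) (K (v j)) = 0 := by
    have heig : LinearMap.adjoint K (K (v i)) = hsym.eigenvalues rfl i • v i :=
      hsym.apply_eigenvectorBasis rfl i
    rw [← LinearMap.adjoint_inner_left, heig, real_inner_smul_left, v.orthonormal.2 hij, mul_zero]
  have hu : Orthonormal ℝ fun i => ‖K (v i)‖⁻¹ • K (v i) := by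
    refine ⟨fun i => norm_smul_inv_norm (norm_pos_iff.1 (hpos i)), fun i j hij => ?_⟩
    simp only [real_inner_smul_left, real_inner_smul_right, horth hij, mul_zero]
  refine ⟨v, OrthonormalBasis.mk hu
    (hu.linearIndependent.span_eq_top_of_card_eq_finrank' (by simp)).ge,
    fun i => ‖K (v i)‖, hpos, fun i => ?_⟩
  rw [OrthonormalBasis.coe_mk, smul_inv_smul₀ (hpos i).ne']

/-- Here `U` is the orthogonal factor of the polar decomposition of `K`, and the inequality is
`s < ((1 + s) / 2) ^ 2` for each singular value `s ≠ 1` of `K`. -/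
lemma exists_linearIsometryEquiv_abs_det_lt_det_midpoint_sq {K : W →ₗ[ℝ] W}
    (hK : Function.Injective K) :
    ∃ U : W ≃ₗᵢ[ℝ] W, K ≠ U.toLinearEquiv →
      |LinearMap.det K| < LinearMap.det (midpoint ℝ (U.toLinearEquiv : W →ₗ[ℝ] W) K) ^ 2 := by
  obtain ⟨v, u, s, hs, hvu⟩ := exists_orthonormalBasis_map_eq_smul hK
  let U := v.equiv u (Equiv.refl _)
  have hU (i) : U (v i) = u i := by simp [U]
  refine ⟨U, fun hne => ?_⟩
  have hmid (i) : midpoint ℝ (U.toLinearEquiv : W →ₗ[ℝ] W) K (v i) = ((1 + s i) / 2) • u i := by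
    simp only [midpoint_eq_smul_add, LinearMap.smul_apply, LinearMap.add_apply,
      LinearEquiv.coe_coe, LinearIsometryEquiv.coe_toLinearEquiv, hU, hvu, invOf_eq_inv]
    module
  obtain ⟨j, hj⟩ : ∃ j, s j ≠ 1 := by
    by_contra! hone
    exact hne (v.toBasis.ext fun i => by simp [hvu, hone, hU])
  rw [← sq_abs (LinearMap.det _), abs_det_eq_prod_of_orthonormalBasis v u hvu,
    abs_det_eq_prod_of_orthonormalBasis v u hmid, sq_abs, ← Finset.prod_pow,
    abs_of_pos (Finset.prod_pos fun i _ => hs i)]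
  refine Finset.prod_lt_prod (fun i _ => hs i) (fun i _ => ?_) ⟨j, Finset.mem_univ j, ?_⟩
  · nlinarith [sq_nonneg (s i - 1)]
  · nlinarith [sq_pos_of_ne_zero (sub_ne_zero.2 hj)]

end VolumeExpansion

section DetMaximal

variable {V W : Type*} [NormedAddCommGroup V] [NormedSpace ℝ V] [NormedAddCommGroup W]
  [NormedSpace ℝ W]

/-- `g` has the largest `|det|` among the affine self-maps of `W` carrying `Y` into the closed unit
ball. The volume of `g ⁻¹' closedBall 0 1` is inversely proportional to `|det g|`, so for invertible
`g` this says that `g ⁻¹' closedBall 0 1` is an ellipsoid of least volume among those containing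
`Y`. Maximising over `g` rather than over ellipsoids makes the constraint convex. -/
def IsDetMaximal (Y : Set W) (g : W →ᵃ[ℝ] W) : Prop :=
  MapsTo g Y (closedBall 0 1) ∧
    ∀ h : W →ᵃ[ℝ] W, MapsTo h Y (closedBall 0 1) →
      |LinearMap.det h.linear| ≤ |LinearMap.det g.linear|

lemma isCompact_setOf_mapsTo [FiniteDimensional ℝ V] [FiniteDimensional ℝ W] {Y : Set V}
    (hY : affineSpan ℝ Y = ⊤) {C : Set W} (hC : IsCompact C) :
    IsCompact {g : V →ᴬ[ℝ] W | MapsTo g Y C} := by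
  let eval : (V →ᴬ[ℝ] W) →ₗ[ℝ] (Y → W) :=
    { toFun := fun g y => g y, map_add' := fun _ _ => rfl, map_smul' := fun _ _ => rfl }
  have heval : LinearMap.ker eval = ⊥ := by
    refine LinearMap.ker_eq_bot.2 fun g h hgh => ContinuousAffineMap.toAffineMap_injective ?_
    exact AffineMap.ext_on hY fun y hy => congr_fun hgh ⟨y, hy⟩
  have : FiniteDimensional ℝ (V →ᴬ[ℝ] W) :=
    (ContinuousAffineMap.decompLinearIsometryEquiv ℝ ℝ V W).toLinearEquiv.symm.finiteDimensional
  have hpre : {g : V →ᴬ[ℝ] W | MapsTo g Y C} = eval ⁻¹' univ.pi fun _ => C := by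
    ext g
    simp [MapsTo, eval]
  rw [hpre]
  exact (LinearMap.isClosedEmbedding_of_injective heval).isCompact_preimage
    (isCompact_univ_pi fun _ => hC)

lemma exists_isDetMaximal [FiniteDimensional ℝ W] {Y : Set W} (hYb : Bornology.IsBounded Y)
    (hY : affineSpan ℝ Y = ⊤) : ∃ g : W ≃ᵃ[ℝ] W, IsDetMaximal Y g := by
  obtain ⟨r, hr, hYr⟩ := hYb.exists_pos_norm_le
  let g₀ : W →ᴬ[ℝ] W := (r⁻¹ • ContinuousLinearMap.id ℝ W).toContinuousAffineMap
  have hg₀ : MapsTo g₀ Y (closedBall 0 1) := fun y hy => by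
    rw [mem_closedBall_zero_iff]
    simpa [g₀, norm_smul, abs_of_pos hr] using inv_mul_le_one_of_le₀ (hYr y hy) hr.le
  have hdet : Continuous fun g : W →ᴬ[ℝ] W => |g.contLinear.det| :=
    (ContinuousLinearMap.continuous_det.comp (continuous_snd.comp
      (ContinuousAffineMap.decompLinearIsometryEquiv ℝ ℝ W W).continuous)).abs
  obtain ⟨g, hg, hmax⟩ := (isCompact_setOf_mapsTo hY (isCompact_closedBall 0 1)).exists_isMaxOn
    ⟨g₀, hg₀⟩ hdet.continuousOn
  have hg_pos : 0 < |g.contLinear.det| := by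
    refine lt_of_lt_of_le ?_ (hmax hg₀)
    have h : g₀.contLinear.det = r⁻¹ ^ Module.finrank ℝ W := by
      simp [g₀, ContinuousLinearMap.det]
    simp only [h]
    positivity
  have hbij : Function.Bijective g.toAffineMap := by
    rw [← AffineMap.linear_bijective_iff]
    exact (LinearMap.equivOfDetNeZero _ (abs_pos.1 hg_pos)).bijective
  refine ⟨AffineEquiv.ofBijective hbij, hg, fun h hh => ?_⟩
  exact hmax (a := ⟨h, h.continuous_of_finiteDimensional⟩) hh

variable {Y : Set W} {g h : W →ᵃ[ℝ] W}

lemma IsDetMaximal.abs_det_eq (hg : IsDetMaximal Y g) (hh : IsDetMaximal Y h) :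
    |LinearMap.det g.linear| = |LinearMap.det h.linear| :=
  (hh.2 g hg.1).antisymm (hg.2 h hh.1)

lemma IsDetMaximal.comp_symm (hg : IsDetMaximal Y g) (e : W ≃ᵃ[ℝ] W) :
    IsDetMaximal (e '' Y) (g.comp e.symm) := by
  have he : LinearMap.det (e.linear : W →ₗ[ℝ] W) ≠ 0 := (LinearEquiv.isUnit_det' e.linear).ne_zero
  refine ⟨?_, fun h hh => ?_⟩
  · rintro _ ⟨y, hy, rfl⟩
    simpa using hg.1 hy
  · have hle := hg.2 (h.comp e) fun y hy => hh (mem_image_of_mem e hy)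
    have hinv : LinearMap.det (g.comp (e.symm : W →ᵃ[ℝ] W)).linear *
        LinearMap.det (e.linear : W →ₗ[ℝ] W) = LinearMap.det g.linear := by
      rw [← LinearMap.det_comp]
      congr 1
      ext x
      simp
    rw [← hinv, AffineMap.comp_linear, LinearMap.det_comp, abs_mul, abs_mul] at hle
    exact le_of_mul_le_mul_right hle (abs_pos.2 he)

lemma IsDetMaximal.abs_det_le_pow_mul (hg : IsDetMaximal Y g) {r : ℝ} (hr : 0 < r)
    (hh : MapsTo h Y (closedBall 0 r)) :
    |LinearMap.det h.linear| ≤ r ^ Module.finrank ℝ W * |LinearMap.det g.linear| := by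
  have hmaps : MapsTo (r⁻¹ • h) Y (closedBall 0 1) := fun y hy => by
    have hy' := hh hy
    rw [mem_closedBall_zero_iff] at hy' ⊢
    simpa [norm_smul, abs_of_pos hr] using inv_mul_le_one_of_le₀ hy' hr.le
  have hle := hg.2 _ hmaps
  rwa [AffineMap.smul_linear, LinearMap.det_smul, abs_mul, abs_of_pos (by positivity), inv_pow,
    inv_mul_le_iff₀ (by positivity)] at hle

/-- Otherwise, by uniform convexity, the midpoint of `g` and `g + c` would carry `Y` into a ball of
radius less than one. -/
lemma IsDetMaximal.eq_zero_of_mapsTo_add_const [UniformConvexSpace W] [FiniteDimensional ℝ W]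
    (hg : IsDetMaximal Y g) (hdet : LinearMap.det g.linear ≠ 0) {c : W}
    (hgc : MapsTo (fun x => g x + c) Y (closedBall 0 1)) : c = 0 := by
  by_contra hc
  have : Nontrivial W := ⟨c, 0, hc⟩
  obtain ⟨δ, hδ, hconv⟩ := exists_forall_closed_ball_dist_add_le_two_sub W (norm_pos_iff.2 hc)
  obtain ⟨r, hrδ, hr₁⟩ : ∃ r, max 0 (1 - δ / 2) < r ∧ r < 1 :=
    exists_between (max_lt one_pos (by linarith))
  obtain ⟨hr₀, hr⟩ := max_lt_iff.1 hrδ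
  have hmaps : MapsTo (g + AffineMap.const ℝ W ((2⁻¹ : ℝ) • c)) Y (closedBall 0 r) := fun y hy => by
    have hsum := hconv (mem_closedBall_zero_iff.1 (hg.1 hy)) (mem_closedBall_zero_iff.1 (hgc hy))
      (by simp)
    have hmid : (g + AffineMap.const ℝ W ((2⁻¹ : ℝ) • c)) y = (2⁻¹ : ℝ) • (g y + (g y + c)) := by
      simp only [AffineMap.coe_add, AffineMap.coe_const, Pi.add_apply, Function.const_apply]
      module
    rw [mem_closedBall_zero_iff, hmid, norm_smul, Real.norm_of_nonneg (by norm_num)]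
    linarith
  have hle := hg.abs_det_le_pow_mul hr₀ hmaps
  rw [AffineMap.add_linear, AffineMap.const_linear, add_zero] at hle
  have hpow : r ^ Module.finrank ℝ W < 1 := pow_lt_one₀ hr₀.le hr₁ Module.finrank_pos.ne'
  exact hle.not_gt (mul_lt_of_lt_one_left (abs_pos.2 hdet) hpow)

end DetMaximal

section Uniqueness

variable {W : Type*} [NormedAddCommGroup W] [InnerProductSpace ℝ W] [FiniteDimensional ℝ W]
  {Y : Set W}

lemma IsDetMaximal.exists_linear_eq_linearIsometryEquiv {k : W →ᵃ[ℝ] W}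
    (hid : IsDetMaximal Y (AffineMap.id ℝ W)) (hk : IsDetMaximal Y k) :
    ∃ U : W ≃ₗᵢ[ℝ] W, k.linear = U.toLinearEquiv := by
  have hdet : |LinearMap.det k.linear| = 1 := by simpa using hk.abs_det_eq hid
  obtain ⟨U, hU⟩ := exists_linearIsometryEquiv_abs_det_lt_det_midpoint_sq
    (LinearMap.equivOfDetNeZero _ (abs_pos.1 (hdet ▸ one_pos))).injective
  refine ⟨U, by_contra fun hne => ?_⟩
  let u : W →ᵃ[ℝ] W := (U.toLinearEquiv : W →ₗ[ℝ] W).toAffineMap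
  have hmaps : MapsTo (midpoint ℝ u k : W →ᵃ[ℝ] W) Y (closedBall 0 1) := fun y hy => by
    have huy : u y ∈ closedBall 0 1 := by simpa [u] using hid.1 hy
    simpa [midpoint_eq_smul_add] using (convex_closedBall (0 : W) 1).midpoint_mem huy (hk.1 hy)
  have hlin : (midpoint ℝ u k : W →ᵃ[ℝ] W).linear = midpoint ℝ u.linear k.linear := by
    simp [midpoint_eq_smul_add]
  have hle : |LinearMap.det (midpoint ℝ u.linear k.linear)| ≤ 1 := by
    simpa [hlin] using hid.2 _ hmaps
  have hlt : 1 < LinearMap.det (midpoint ℝ u.linear k.linear) ^ 2 := hdet ▸ hU hne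
  exact hlt.not_ge ((sq_le_one_iff_abs_le_one _).2 hle)

lemma IsDetMaximal.norm_apply_eq {k : W →ᵃ[ℝ] W} (hid : IsDetMaximal Y (AffineMap.id ℝ W))
    (hk : IsDetMaximal Y k) (x : W) : ‖k x‖ = ‖x‖ := by
  obtain ⟨U, hU⟩ := hid.exists_linear_eq_linearIsometryEquiv hk
  let u : W →ᵃ[ℝ] W := (U.toLinearEquiv : W →ₗ[ℝ] W).toAffineMap
  have hku (x) : k x = u x + k 0 := by simpa [hU, u] using k.map_vadd 0 x
  have hdet : |LinearMap.det u.linear| = 1 := by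
    simpa [← hU, u] using hk.abs_det_eq hid
  have hu : IsDetMaximal Y u :=
    ⟨fun y hy => by simpa [u] using hid.1 hy, fun h hh => by simpa [hdet] using hid.2 h hh⟩
  have hk₀ : k 0 = 0 := hu.eq_zero_of_mapsTo_add_const (abs_pos.1 (hdet ▸ one_pos))
    fun y hy => by simpa only [← hku] using hk.1 hy
  rw [hku, hk₀, add_zero]
  exact U.norm_map x

/-- The affine change of variables `p` turns the first ellipsoid into the unit ball. -/
lemma IsDetMaximal.preimage_closedBall_eq {p : W ≃ᵃ[ℝ] W} {q : W →ᵃ[ℝ] W}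
    (hp : IsDetMaximal Y p) (hq : IsDetMaximal Y q) :
    p ⁻¹' closedBall 0 1 = q ⁻¹' closedBall 0 1 := by
  have hpp : (p : W →ᵃ[ℝ] W).comp p.symm = AffineMap.id ℝ W := by
    ext x
    simp
  have hid : IsDetMaximal (p '' Y) (AffineMap.id ℝ W) := hpp ▸ hp.comp_symm p
  ext x
  have hnorm : ‖q x‖ = ‖p x‖ := by simpa using hid.norm_apply_eq (hq.comp_symm p) (p x)
  simp only [mem_preimage, mem_closedBall_zero_iff, hnorm]

end Uniqueness

section SolidEllipsoid

variable {W : Type*} [NormedAddCommGroup W] [NormedSpace ℝ W]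

/-- Full-dimensional ellipsoids of `W`, written as preimages of the closed unit ball. -/
def IsSolidEllipsoid (E : Set W) : Prop :=
  ∃ g : W ≃ᵃ[ℝ] W, g ⁻¹' closedBall 0 1 = E

variable [FiniteDimensional ℝ W]

lemma isSolidEllipsoid_iff_exists_injective {E : Set W} :
    IsSolidEllipsoid E ↔ ∃ H : W →ᵃ[ℝ] W, Function.Injective H ∧ E = H '' closedBall 0 1 := by
  constructor
  · rintro ⟨g, rfl⟩
    exact ⟨g.symm, g.symm.injective, (g.symm.toEquiv.image_eq_preimage_symm _).symm⟩
  · rintro ⟨H, hH, rfl⟩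
    have hbij : Function.Bijective H := by
      rw [← AffineMap.linear_injective_iff] at hH
      exact (AffineMap.linear_bijective_iff H).1 ⟨hH, LinearMap.injective_iff_surjective.1 hH⟩
    exact ⟨(AffineEquiv.ofBijective hbij).symm,
      ((AffineEquiv.ofBijective hbij).toEquiv.image_eq_preimage_symm _).symm⟩

variable [MeasurableSpace W] [BorelSpace W] (μ : Measure W)
  [μ.IsAddHaarMeasure]

lemma addHaar_preimage_affineEquiv (g : W ≃ᵃ[ℝ] W) (s : Set W) :
    μ (g ⁻¹' s) = ENNReal.ofReal |(LinearMap.det (g.linear : W →ₗ[ℝ] W))⁻¹| * μ s := by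
  have hg : ⇑g = (fun x => x + g 0) ∘ (g.linear : W →ₗ[ℝ] W) := by
    ext x
    simpa using g.map_vadd 0 x
  rw [hg, preimage_comp, Measure.addHaar_preimage_linearMap _ (LinearEquiv.isUnit_det' _).ne_zero,
    measure_preimage_add_right]

lemma addHaar_preimage_closedBall_le_iff (p q : W ≃ᵃ[ℝ] W) :
    μ (p ⁻¹' closedBall 0 1) ≤ μ (q ⁻¹' closedBall 0 1) ↔
      |LinearMap.det (q.linear : W →ₗ[ℝ] W)| ≤ |LinearMap.det (p.linear : W →ₗ[ℝ] W)| := by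
  have hdet (g : W ≃ᵃ[ℝ] W) : 0 < |LinearMap.det (g.linear : W →ₗ[ℝ] W)| :=
    abs_pos.2 (LinearEquiv.isUnit_det' g.linear).ne_zero
  rw [addHaar_preimage_affineEquiv, addHaar_preimage_affineEquiv,
    ENNReal.mul_le_mul_iff_left (measure_closedBall_pos μ _ one_pos).ne'
      measure_closedBall_lt_top.ne,
    ENNReal.ofReal_le_ofReal_iff (abs_nonneg _), abs_inv, abs_inv, inv_le_inv₀ (hdet p) (hdet q)]

end SolidEllipsoid

/-- The Löwner–John theorem. -/
theorem existsUnique_isSolidEllipsoid_minimal {W : Type*} [NormedAddCommGroup W]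
    [InnerProductSpace ℝ W] [FiniteDimensional ℝ W] [MeasurableSpace W] [BorelSpace W]
    (μ : Measure W) [μ.IsAddHaarMeasure] {Y : Set W} (hYb : Bornology.IsBounded Y)
    (hY : affineSpan ℝ Y = ⊤) :
    ∃! E : Set W, (IsSolidEllipsoid E ∧ Y ⊆ E) ∧
      ∀ E', IsSolidEllipsoid E' ∧ Y ⊆ E' → μ E ≤ μ E' := by
  obtain ⟨p, hp⟩ := exists_isDetMaximal hYb hY
  refine ⟨p ⁻¹' closedBall 0 1, ⟨⟨⟨p, rfl⟩, hp.1⟩, ?_⟩, ?_⟩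
  · rintro _ ⟨⟨q, rfl⟩, hYq⟩
    exact (addHaar_preimage_closedBall_le_iff μ p q).2 (hp.2 q hYq)
  · rintro _ ⟨⟨⟨q, rfl⟩, hYq⟩, hmin⟩
    have hqp := (addHaar_preimage_closedBall_le_iff μ q p).1 (hmin _ ⟨⟨p, rfl⟩, hp.1⟩)
    have hq : IsDetMaximal Y (q : W →ᵃ[ℝ] W) := ⟨hYq, fun h hh => (hp.2 h hh).trans hqp⟩
    exact (hp.preimage_closedBall_eq hq).symm

section AffineMaps

lemma exists_linearMap_apply_eq_affineMap {R V W : Type*} [CommRing R] [AddCommGroup V] [Module R V]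
    [AddCommGroup W] [Module R W] (f : V →ₗ[R] R) (g : V →ᵃ[R] W) :
    ∃ M : V →ₗ[R] W, ∀ x, f x = 1 → M x = g x := by
  refine ⟨g.linear + f.smulRight (g 0), fun x hx => ?_⟩
  simpa [hx] using (g.map_vadd 0 x).symm

lemma exists_affineMap_leftInverse {k V W : Type*} [Field k] [AddCommGroup V] [Module k V]
    [AddCommGroup W] [Module k W] {F : V →ᵃ[k] W} (hF : Function.Injective F) :
    ∃ L : W →ᵃ[k] V, Function.LeftInverse L F := by
  obtain ⟨L, hL⟩ := F.linear.exists_leftInverse_of_injective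
    (LinearMap.ker_eq_bot.2 ((AffineMap.linear_injective_iff F).2 hF))
  refine ⟨L.toAffineMap.comp (AffineMap.id k W - AffineMap.const k W (F 0)), fun x => ?_⟩
  have hx : F.linear x = F x - F 0 := by simpa using F.linearMap_vsub x 0
  simpa [hx] using LinearMap.congr_fun hL x

lemma exists_affineIsometry_range_eq {V P : Type*} [NormedAddCommGroup V] [InnerProductSpace ℝ V]
    [MetricSpace P] [NormedAddTorsor V P] (S : AffineSubspace ℝ P) [FiniteDimensional ℝ S.direction]
    (hS : (S : Set P).Nonempty) :
    ∃ φ : Euc (Module.finrank ℝ S.direction) →ᵃⁱ[ℝ] P, range φ = S := by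
  have : Nonempty S := hS.to_subtype
  let e := (stdOrthonormalBasis ℝ S.direction).repr.symm.toAffineIsometryEquiv.trans
    (AffineIsometryEquiv.vaddConst ℝ (Classical.arbitrary S))
  refine ⟨S.subtypeₐᵢ.comp e.toAffineIsometry, ?_⟩
  rw [AffineIsometry.coe_comp, e.coe_toAffineIsometry, e.surjective.range_comp,
    AffineSubspace.coe_subtypeₐᵢ]
  exact Subtype.range_val

lemma affineSpan_preimage_eq_top {k V W : Type*} [Ring k] [AddCommGroup V] [Module k V]
    [AddCommGroup W] [Module k W] {F : V →ᵃ[k] W} (hF : Function.Injective F) {X : Set W}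
    (hX : range F = affineSpan k X) : affineSpan k (F ⁻¹' X) = ⊤ := by
  rw [← AffineSubspace.comap_map_eq_of_injective hF (affineSpan k (F ⁻¹' X)),
    AffineSubspace.map_span, image_preimage_eq_of_subset (hX ▸ subset_affineSpan k X)]
  ext x
  simp [← SetLike.mem_coe, ← hX]

end AffineMaps

section BallImages

variable {V W : Type*} [NormedAddCommGroup V] [InnerProductSpace ℝ V] [FiniteDimensional ℝ V]
  [NormedAddCommGroup W] [InnerProductSpace ℝ W] [FiniteDimensional ℝ W]

lemma affineSpan_closedBall_eq_top {V : Type*} [NormedAddCommGroup V] [NormedSpace ℝ V] (c : V)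
    {r : ℝ} (hr : 0 < r) : affineSpan ℝ (closedBall c r) = ⊤ :=
  affineSpan_eq_top_of_nonempty_interior ⟨c, interior_mono (subset_convexHull ℝ _)
    (ball_subset_interior_closedBall (mem_ball_self hr))⟩

lemma orthogonalProjectionOnto_image_closedBall {V : Type*} [NormedAddCommGroup V]
    [InnerProductSpace ℝ V] (K : Submodule ℝ V) [K.HasOrthogonalProjection] (r : ℝ) :
    K.orthogonalProjectionOnto '' closedBall 0 r = closedBall 0 r := by
  refine subset_antisymm ?_ fun w hw => ⟨w, by simpa using hw, by simp⟩
  rintro _ ⟨v, hv, rfl⟩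
  rw [mem_closedBall_zero_iff] at hv ⊢
  exact (K.norm_orthogonalProjectionOnto_apply_le v).trans hv

lemma nonempty_linearIsometry_of_finrank_le (h : Module.finrank ℝ W ≤ Module.finrank ℝ V) :
    Nonempty (W →ₗᵢ[ℝ] V) := by
  let b := stdOrthonormalBasis ℝ W
  let u := stdOrthonormalBasis ℝ V
  let K := b.toBasis.constr ℝ (u ∘ Fin.castLE h)
  have hK : K ∘ b.toBasis = u ∘ Fin.castLE h := funext fun i => by simp [K]
  exact ⟨K.isometryOfOrthonormal (by simp [b.orthonormal])
    (hK ▸ u.orthonormal.comp _ (Fin.castLE_injective h))⟩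

lemma finrank_vectorSpan_image_closedBall {W : Type*} [AddCommGroup W] [Module ℝ W]
    (G : V →ᵃ[ℝ] W) :
    Module.finrank ℝ (vectorSpan ℝ (G '' closedBall 0 1)) =
      Module.finrank ℝ (LinearMap.ker G.linear)ᗮ := by
  have hker := (LinearMap.ker G.linear).finrank_add_finrank_orthogonal
  have hrank := G.linear.finrank_range_add_finrank_ker
  rw [← AffineMap.map_vectorSpan, ← direction_affineSpan, affineSpan_closedBall_eq_top _ one_pos,
    AffineSubspace.direction_top, Submodule.map_top]
  omega

lemma affineMap_orthogonalProjectionOnto_orthogonal_ker {W : Type*} [AddCommGroup W] [Module ℝ W]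
    (G : V →ᵃ[ℝ] W) (v : V) :
    G ((LinearMap.ker G.linear)ᗮ.orthogonalProjectionOnto v) = G v := by
  have hker := (LinearMap.ker G.linear)ᗮ.sub_starProjection_mem_orthogonal v
  rw [Submodule.orthogonal_orthogonal, LinearMap.mem_ker] at hker
  exact (vsub_eq_zero_iff_eq.1 ((G.linearMap_vsub _ _).symm.trans hker)).symm

lemma isEllipsoidOfDim_image_closedBall {d n : ℕ} (G : V →ᵃ[ℝ] Euc n)
    (hd : Module.finrank ℝ (vectorSpan ℝ (G '' closedBall 0 1)) = d) :
    IsEllipsoidOfDim d (G '' closedBall 0 1) := by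
  let K := (LinearMap.ker G.linear)ᗮ
  have hK : Module.finrank ℝ K = d := (finrank_vectorSpan_image_closedBall G).symm.trans hd
  let e : Euc d ≃ₗᵢ[ℝ] K := ((stdOrthonormalBasis ℝ K).reindex (finCongr hK)).repr.symm
  refine ⟨G.comp (K.subtype ∘ₗ e.toLinearMap).toAffineMap, ?_, ?_⟩
  · rw [← AffineMap.linear_injective_iff, injective_iff_map_eq_zero]
    intro w hw
    have hker : (e w : V) ∈ LinearMap.ker G.linear := hw
    simpa using inner_self_eq_zero.1 ((e w).2 _ hker)
  · calc G '' closedBall 0 1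
        = (fun w : K => G w) '' (K.orthogonalProjectionOnto '' closedBall 0 1) := by
          simp only [image_image, K, affineMap_orthogonalProjectionOnto_orthogonal_ker]
      _ = (fun w : K => G w) '' (e '' closedBall 0 1) := by
          rw [orthogonalProjectionOnto_image_closedBall, e.image_closedBall, map_zero]
      _ = _ := image_image _ _ _

lemma IsEllipsoidOfDim.exists_eq_image_closedBall {d n : ℕ} {E : Set (Euc n)}
    (hE : IsEllipsoidOfDim d E) (hd : d ≤ Module.finrank ℝ V) :
    ∃ G : V →ᵃ[ℝ] Euc n, E = G '' closedBall 0 1 := by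
  obtain ⟨F, -, rfl⟩ := hE
  obtain ⟨ι⟩ : Nonempty (Euc d →ₗᵢ[ℝ] V) :=
    nonempty_linearIsometry_of_finrank_le (by rwa [finrank_euclideanSpace_fin])
  let K := LinearMap.range ι.toLinearMap
  let e : K ≃ₗᵢ[ℝ] Euc d := ι.equivRange.symm
  refine ⟨F.comp (e.toLinearMap ∘ₗ K.orthogonalProjectionOnto.toLinearMap).toAffineMap, ?_⟩
  calc F '' closedBall 0 1 = F '' (e '' (K.orthogonalProjectionOnto '' closedBall 0 1)) := by
        rw [orthogonalProjectionOnto_image_closedBall, e.image_closedBall, map_zero]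
    _ = _ := by simp only [image_image]; rfl

lemma isEllipsoidOfDim_image_iff {d n : ℕ} (φ : Euc d →ᵃⁱ[ℝ] Euc n) (E : Set (Euc d)) :
    IsEllipsoidOfDim d (φ '' E) ↔ IsSolidEllipsoid E := by
  rw [isSolidEllipsoid_iff_exists_injective]
  constructor
  · rintro ⟨F, hF, hE⟩
    obtain ⟨H, rfl⟩ : ∃ H, F = φ.toAffineMap.comp H := by
      obtain ⟨L, hL⟩ := exists_affineMap_leftInverse (F := φ.toAffineMap) φ.injective
      have hspan := affineSpan_closedBall_eq_top (0 : Euc d) one_pos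
      refine ⟨L.comp F, AffineMap.ext_on hspan fun x hx => ?_⟩
      obtain ⟨y, -, hy⟩ := hE.ge (mem_image_of_mem F hx)
      simp only [AffineMap.comp_apply, ← hy]
      exact (congr_arg φ (hL y)).symm
    exact ⟨H, Function.Injective.of_comp (f := φ) hF,
      φ.injective.image_injective (hE.trans (image_comp φ H _))⟩
  · rintro ⟨H, hH, rfl⟩
    exact ⟨φ.toAffineMap.comp H, φ.injective.comp hH, (image_comp φ H _).symm⟩

end BallImages

/-- The enclosing ellipsoids of `X`: those ellipsoids `E` with `X ⊆ E ⊆ aff X` which have full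
dimension in `aff X`. -/
def IsEnclosingEllipsoid {n : ℕ} (X E : Set (Euc n)) : Prop :=
  IsEllipsoidOfDim (Module.finrank ℝ (affineSpan ℝ X).direction) E ∧ X ⊆ E ∧ E ⊆ affineSpan ℝ X

/-- Homogenisation makes affine maps on the hyperplane of `𝕊` linear. -/
lemma exists_linearMap_eq_image_iff {ℓ n : ℕ} {𝕊 : Set (Euc ℓ)} (hS : IsStateSpace 𝕊)
    (hSE : IsHyperEllipsoid 𝕊) {R : Set (Euc n)} :
    (∃ M : Euc ℓ →ₗ[ℝ] Euc n, R = M '' 𝕊) ↔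
      ∃ G : Euc (ℓ - 1) →ᵃ[ℝ] Euc n, R = G '' closedBall 0 1 := by
  obtain ⟨-, -, f, -, hf⟩ := hS
  obtain ⟨F, hF, hSF⟩ := hSE
  constructor
  · rintro ⟨M, rfl⟩
    exact ⟨M.toAffineMap.comp F, hSF ▸ (image_comp M F _).symm⟩
  · rintro ⟨G, rfl⟩
    obtain ⟨L, hL⟩ := exists_affineMap_leftInverse hF
    obtain ⟨M, hM⟩ := exists_linearMap_apply_eq_affineMap f (G.comp L)
    have hMF : ∀ x ∈ closedBall 0 1, M (F x) = G x := fun x hx => by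
      have hFx : F x ∈ {y | f y = 1} :=
        hf ▸ subset_affineSpan ℝ 𝕊 (hSF ▸ mem_image_of_mem F hx)
      rw [hM _ hFx, AffineMap.comp_apply, hL x]
    exact ⟨M, by rw [hSF, image_image, image_congr hMF]⟩

lemma admissible_iff_isEnclosingEllipsoid {ℓ n : ℕ} {𝕊 : Set (Euc ℓ)} (hS : IsStateSpace 𝕊)
    (hSE : IsHyperEllipsoid 𝕊) {X : Set (Euc n)}
    (hX : Module.finrank ℝ (affineSpan ℝ X).direction ≤ ℓ - 1) {R : Set (Euc n)} :
    Admissible 𝕊 X R ↔ IsEnclosingEllipsoid X R := by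
  refine and_congr_left fun ⟨hXR, hRX⟩ => ?_
  rw [exists_linearMap_eq_image_iff hS hSE]
  constructor
  · rintro ⟨G, rfl⟩
    refine isEllipsoidOfDim_image_closedBall G ?_
    rw [← direction_affineSpan,
      (affineSpan_mono ℝ hXR).antisymm (affineSpan_le.2 hRX)]
  · exact fun hR => hR.exists_eq_image_closedBall (by simpa using hX)

lemma isEnclosingEllipsoid_image_iff {n : ℕ} {X : Set (Euc n)}
    {φ : Euc (Module.finrank ℝ (affineSpan ℝ X).direction) →ᵃⁱ[ℝ] Euc n}
    (hφ : range φ = affineSpan ℝ X) {E : Set (Euc (Module.finrank ℝ (affineSpan ℝ X).direction))} :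
    IsEnclosingEllipsoid X (φ '' E) ↔ IsSolidEllipsoid E ∧ φ ⁻¹' X ⊆ E := by
  have hsub : X ⊆ φ '' E ↔ φ ⁻¹' X ⊆ E := by
    rw [← image_subset_image_iff φ.injective,
      image_preimage_eq_of_subset (hφ ▸ subset_affineSpan ℝ X)]
  rw [IsEnclosingEllipsoid, isEllipsoidOfDim_image_iff, hsub, ← hφ,
    and_iff_left (image_subset_range φ E)]

theorem existsUnique_isEnclosingEllipsoid_minimal {n : ℕ} {X : Set (Euc n)} (hX : X.Nonempty)
    (hXb : Bornology.IsBounded X) :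
    ∃! E, IsEnclosingEllipsoid X E ∧ ∀ E', IsEnclosingEllipsoid X E' →
      μH[(Module.finrank ℝ (affineSpan ℝ X).direction : ℝ)] E ≤
        μH[(Module.finrank ℝ (affineSpan ℝ X).direction : ℝ)] E' := by
  obtain ⟨φ, hφ⟩ := exists_affineIsometry_range_eq (affineSpan ℝ X) ((affineSpan_nonempty ℝ).2 hX)
  have hiff (E) := isEnclosingEllipsoid_image_iff hφ (E := E)
  have hμ (E) := φ.isometry.hausdorffMeasure_image (Or.inl (Nat.cast_nonneg
    (Module.finrank ℝ (affineSpan ℝ X).direction))) E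
  have himage {E} (hE : IsEnclosingEllipsoid X E) : ∃ E₀, φ '' E₀ = E :=
    subset_range_iff_exists_image_eq.1 (hφ ▸ hE.2.2)
  obtain ⟨E, ⟨hE, hmin⟩, huniq⟩ := existsUnique_isSolidEllipsoid_minimal
    μH[(Module.finrank ℝ (affineSpan ℝ X).direction : ℝ)]
    (φ.isometry.antilipschitz.isBounded_preimage hXb) (affineSpan_preimage_eq_top φ.injective hφ)
  refine ⟨φ '' E, ⟨(hiff E).2 hE, fun E' hE' => ?_⟩, fun E' ⟨hE', hmin'⟩ => ?_⟩
  · obtain ⟨E₁, rfl⟩ := himage hE'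
    rw [hμ, hμ]
    exact hmin E₁ ((hiff E₁).1 hE')
  · obtain ⟨E₁, rfl⟩ := himage hE'
    refine congr_arg _ (huniq E₁ ⟨(hiff E₁).1 hE', fun E₂ hE₂ => ?_⟩)
    rw [← hμ, ← hμ E₂]
    exact hmin' _ ((hiff E₂).2 hE₂)

theorem stmt_3 {ℓ : ℕ} (hℓ : 2 ≤ ℓ) (𝕊 : Set (Euc ℓ)) (hS : IsStateSpace 𝕊)
    (hSE : IsHyperEllipsoid 𝕊) (n : ℕ) (X : Set (Euc n)) (hXne : X.Nonempty)
    (hXb : Bornology.IsBounded X) (d : ℕ)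
    (hd : d = Module.finrank ℝ (affineSpan ℝ X).direction) (hdℓ : d ≤ ℓ - 1) :
    ∃ E : Set (Euc n), ddi X 𝕊 = {E} ∧ IsEllipsoidOfDim d E ∧
      X ⊆ E ∧ E ⊆ (affineSpan ℝ X : Set (Euc n)) ∧
      ∀ E' : Set (Euc n), IsEllipsoidOfDim d E' → X ⊆ E' →
        E' ⊆ (affineSpan ℝ X : Set (Euc n)) → μH[(d : ℝ)] E ≤ μH[(d : ℝ)] E' := by
  subst hd
  have hadm (R) : Admissible 𝕊 X R ↔ IsEnclosingEllipsoid X R :=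
    admissible_iff_isEnclosingEllipsoid hS hSE hdℓ
  obtain ⟨E, ⟨hE, hmin⟩, huniq⟩ := existsUnique_isEnclosingEllipsoid_minimal hXne hXb
  refine ⟨E, ?_, hE.1, hE.2.1, hE.2.2, fun E' hE' hXE' hE'X => hmin E' ⟨hE', hXE', hE'X⟩⟩
  simp only [ddi, hadm]
  exact eq_singleton_iff_unique_mem.2 ⟨⟨hE, hmin⟩, huniq⟩
end
end

section
/- Let d ≥ 1 and let S ⊆ ℝ^d be the vertex set of a regular d-simplex inscribed in the unit sphere, i.e., S consists of d + 1 points of Euclidean norm 1 with all pairwise distances equal, whose affine span is ℝ^d. Then every ellipsoid E ⊆ ℝ^d containing S has Lebesgue measure at least that of the closed unit ball B, with equality if and only if E = B. In other words, the closed unit ball is the unique minimum-volume enclosing ellipsoid of S. -/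
open MeasureTheory Metric Set

noncomputable section

/-- An ellipsoid in `ℝ^d`: the image of the closed unit ball under an invertible affine
transformation. -/
def IsEllipsoid {d : ℕ} (E : Set (Euc d)) : Prop :=
  ∃ F : Euc d ≃ᵃ[ℝ] Euc d, E = F '' closedBall 0 1

/-! If unit vectors `a` and weights `w a ≥ 0` satisfy `∑ w a • a = 0` and `∑ w a • (a ⊗ a) = 1`,
then an affine map `G x = A x + v` has weighted second moment
`∑ w a * ‖G a‖² = tr (Aᵀ A) + n * ‖v‖²`, where `n` is the dimension and also the total weight.
If `G` carries an ellipsoid containing these vectors onto the unit ball, the left side is at most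
`n`, so the inequality of arithmetic and geometric means for the eigenvalues of `Aᵀ A` gives
`|det A| ≤ 1`, with equality only if `A` is orthogonal and `v = 0`. The vertices of a regular
simplex carry such a decomposition with constant weights. -/

open scoped RealInnerProductSpace
open InnerProductSpace (rankOne)

section ArithmeticGeometricMean

variable {ι : Type*} {s : Finset ι} {x : ι → ℝ}

theorem prod_exp_sub_one_le_one (hsum : ∑ i ∈ s, x i ≤ s.card) :
    ∏ i ∈ s, Real.exp (x i - 1) ≤ 1 := by
  rw [← Real.exp_sum, Real.exp_le_one_iff, Finset.sum_sub_distrib]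
  simpa using hsum

theorem le_exp_sub_one (r : ℝ) : r ≤ Real.exp (r - 1) := by
  simpa using Real.add_one_le_exp (r - 1)

theorem prod_le_one_of_sum_le_card (hx : ∀ i ∈ s, 0 ≤ x i) (hsum : ∑ i ∈ s, x i ≤ s.card) :
    ∏ i ∈ s, x i ≤ 1 :=
  (Finset.prod_le_prod hx fun i _ => le_exp_sub_one (x i)).trans (prod_exp_sub_one_le_one hsum)

theorem eq_one_of_prod_eq_one_of_sum_le_card (hx : ∀ i ∈ s, 0 ≤ x i)
    (hsum : ∑ i ∈ s, x i ≤ s.card) (hprod : ∏ i ∈ s, x i = 1) : ∀ i ∈ s, x i = 1 := by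
  by_contra! ⟨j, hj, hne⟩
  have hpos : ∀ i ∈ s, 0 < x i := fun i hi =>
    (hx i hi).lt_of_ne' (Finset.prod_ne_zero_iff.1 (hprod ▸ one_ne_zero) i hi)
  have hlt : x j < Real.exp (x j - 1) := by
    simpa using Real.add_one_lt_exp (sub_ne_zero.2 hne)
  have hprod_lt := Finset.prod_lt_prod hpos (fun i _ => le_exp_sub_one (x i)) ⟨j, hj, hlt⟩
  exact (hprod_lt.trans_le (prod_exp_sub_one_le_one hsum)).ne hprod

end ArithmeticGeometricMean

section Determinant

variable {V : Type*} [NormedAddCommGroup V] [InnerProductSpace ℝ V] [FiniteDimensional ℝ V]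
  {T : V →ₗ[ℝ] V}

theorem det_le_one_of_trace_le_finrank (hT : T.IsPositive)
    (htr : T.trace ℝ V ≤ Module.finrank ℝ V) : T.det ≤ 1 := by
  rw [hT.isSymmetric.det_eq_prod_eigenvalues rfl]
  exact prod_le_one_of_sum_le_card (fun i _ => hT.nonneg_eigenvalues rfl i)
    (by simpa using (hT.isSymmetric.trace_eq_sum_eigenvalues rfl).ge.trans htr)

theorem eq_id_of_det_eq_one_of_trace_le_finrank (hT : T.IsPositive)
    (htr : T.trace ℝ V ≤ Module.finrank ℝ V) (hdet : T.det = 1) : T = LinearMap.id := by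
  rw [hT.isSymmetric.det_eq_prod_eigenvalues rfl] at hdet
  have hone := eq_one_of_prod_eq_one_of_sum_le_card (fun i _ => hT.nonneg_eigenvalues rfl i)
    (by simpa using (hT.isSymmetric.trace_eq_sum_eigenvalues rfl).ge.trans htr) hdet
  refine (hT.isSymmetric.eigenvectorBasis rfl).toBasis.ext fun i => ?_
  simp [hT.isSymmetric.apply_eigenvectorBasis rfl i, hone i (Finset.mem_univ i)]

theorem det_adjoint_comp_self (A : V →ₗ[ℝ] V) : (A.adjoint ∘ₗ A).det = |A.det| ^ 2 := by
  simpa only [A.normDet_eq_abs_det, RCLike.ofReal_real_eq_id, id_eq] using A.normDet_sq.symm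

end Determinant

section JohnDecomposition

variable {V W : Type*} [NormedAddCommGroup V] [InnerProductSpace ℝ V] [NormedAddCommGroup W]
  [InnerProductSpace ℝ W]

/-- A John decomposition of the identity: the unit vectors in `t`, weighted by `w`, are centred at
the origin and satisfy `∑ w a • (a ⊗ a) = 1`. In John's theorem this is the condition under which
the unit ball is the minimum-volume ellipsoid containing `t`. Only the values of `w` on `t`
matter. -/
structure IsJohnDecomposition (t : Finset V) (w : V → ℝ) : Prop where
  weight_nonneg : ∀ a ∈ t, 0 ≤ w a
  norm_eq_one : ∀ a ∈ t, ‖a‖ = 1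
  sum_smul_eq_zero : ∑ a ∈ t, w a • a = 0
  sum_smul_rankOne : ∑ a ∈ t, w a • rankOne ℝ a a = ContinuousLinearMap.id ℝ V

namespace IsJohnDecomposition

variable {t : Finset V} {w : V → ℝ} [FiniteDimensional ℝ V] [FiniteDimensional ℝ W]

theorem sum_mul_inner_apply_eq_trace (ht : IsJohnDecomposition t w) (T : V →ₗ[ℝ] V) :
    ∑ a ∈ t, w a * ⟪a, T a⟫ = T.trace ℝ V := by
  have hT : T = ∑ a ∈ t, w a • (rankOne ℝ (T a) a).toLinearMap := by
    ext x
    have hx : ∑ a ∈ t, w a • ⟪a, x⟫ • a = x := by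
      simpa [sum_apply] using congr($(ht.sum_smul_rankOne) x)
    conv_lhs => rw [← hx]
    simp
  conv_rhs => rw [hT]
  simp [InnerProductSpace.trace_rankOne]

theorem sum_weight_eq_finrank (ht : IsJohnDecomposition t w) :
    ∑ a ∈ t, w a = Module.finrank ℝ V := by
  rw [← LinearMap.trace_id ℝ V, ← ht.sum_mul_inner_apply_eq_trace]
  exact Finset.sum_congr rfl fun a ha => by simp [ht.norm_eq_one a ha]

theorem sum_mul_norm_apply_sq (ht : IsJohnDecomposition t w) (G : V →ᵃ[ℝ] W) :
    ∑ a ∈ t, w a * ‖G a‖ ^ 2 =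
      (G.linear.adjoint ∘ₗ G.linear).trace ℝ V + Module.finrank ℝ V * ‖G 0‖ ^ 2 := by
  have hcross : ∑ a ∈ t, w a * ⟪G.linear a, G 0⟫ = 0 := by
    simpa [sum_inner, inner_smul_left] using
      congr(⟪G.linear $(ht.sum_smul_eq_zero), G 0⟫)
  have hexpand (a : V) : w a * ‖G a‖ ^ 2 = w a * ⟪a, (G.linear.adjoint ∘ₗ G.linear) a⟫ +
      2 * (w a * ⟪G.linear a, G 0⟫) + w a * ‖G 0‖ ^ 2 := by
    have hG : G a = G.linear a + G 0 := congr_fun G.decomp a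
    rw [hG, norm_add_sq_real, LinearMap.comp_apply, LinearMap.adjoint_inner_right,
      real_inner_self_eq_norm_sq]
    ring
  simp_rw [hexpand, Finset.sum_add_distrib, ← Finset.mul_sum, ← Finset.sum_mul]
  rw [hcross, ht.sum_mul_inner_apply_eq_trace, ht.sum_weight_eq_finrank]
  ring

theorem trace_add_finrank_mul_le (ht : IsJohnDecomposition t w) {G : V →ᵃ[ℝ] W}
    (hG : MapsTo G t (closedBall 0 1)) :
    (G.linear.adjoint ∘ₗ G.linear).trace ℝ V + Module.finrank ℝ V * ‖G 0‖ ^ 2 ≤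
      Module.finrank ℝ V := by
  rw [← ht.sum_mul_norm_apply_sq, ← ht.sum_weight_eq_finrank]
  exact Finset.sum_le_sum fun a ha => mul_le_of_le_one_right (ht.weight_nonneg a ha) <|
    pow_le_one₀ (norm_nonneg _) (mem_closedBall_zero_iff.1 (hG ha))

theorem trace_adjoint_comp_self_le (ht : IsJohnDecomposition t w) {G : V →ᵃ[ℝ] W}
    (hG : MapsTo G t (closedBall 0 1)) :
    (G.linear.adjoint ∘ₗ G.linear).trace ℝ V ≤ Module.finrank ℝ V :=
  (le_add_of_nonneg_right (by positivity)).trans (ht.trace_add_finrank_mul_le hG)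

theorem abs_det_linear_le_one (ht : IsJohnDecomposition t w) {G : V →ᵃ[ℝ] V}
    (hG : MapsTo G t (closedBall 0 1)) : |G.linear.det| ≤ 1 := by
  rw [← sq_le_one_iff₀ (abs_nonneg _), ← det_adjoint_comp_self]
  exact det_le_one_of_trace_le_finrank G.linear.isPositive_adjoint_comp_self
    (ht.trace_adjoint_comp_self_le hG)

theorem norm_apply_eq_norm_of_abs_det_linear_eq_one (ht : IsJohnDecomposition t w)
    {G : V →ᵃ[ℝ] V} (hG : MapsTo G t (closedBall 0 1)) (hdet : |G.linear.det| = 1) (x : V) :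
    ‖G x‖ = ‖x‖ := by
  have hid : G.linear.adjoint ∘ₗ G.linear = LinearMap.id :=
    eq_id_of_det_eq_one_of_trace_le_finrank G.linear.isPositive_adjoint_comp_self
      (ht.trace_adjoint_comp_self_le hG) (by rw [det_adjoint_comp_self, hdet, one_pow])
  have hzero : G 0 = 0 := by
    nontriviality V
    have hle := ht.trace_add_finrank_mul_le hG
    rw [hid, LinearMap.trace_id, add_le_iff_nonpos_right] at hle
    have hdim : (0 : ℝ) < Module.finrank ℝ V := mod_cast Module.finrank_pos
    simpa using nonpos_of_mul_nonpos_right hle hdim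
  have hGx : G x = G.linear x := by simpa [hzero] using congr_fun G.decomp x
  rw [hGx, ← sq_eq_sq₀ (norm_nonneg _) (norm_nonneg _), ← real_inner_self_eq_norm_sq,
    ← real_inner_self_eq_norm_sq, ← LinearMap.adjoint_inner_right, ← LinearMap.comp_apply, hid,
    LinearMap.id_apply]

end IsJohnDecomposition

end JohnDecomposition

section RegularSimplex

variable {V : Type*} [NormedAddCommGroup V] [InnerProductSpace ℝ V]

theorem eq_zero_of_inner_eq_const {S : Set V} (hspan : affineSpan ℝ S = ⊤) {v : V} {c : ℝ}
    (h : ∀ a ∈ S, ⟪v, a⟫ = c) : v = 0 := by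
  have hconst : (innerₛₗ ℝ v).toAffineMap = AffineMap.const ℝ V c := AffineMap.ext_on hspan h
  have hc : 0 = c := by simpa using congr($hconst 0)
  simpa [← hc] using congr($hconst v)

theorem real_inner_eq_one_sub_dist_sq_div_two {a b : V} (ha : ‖a‖ = 1) (hb : ‖b‖ = 1) :
    ⟪a, b⟫ = 1 - dist a b ^ 2 / 2 := by
  rw [dist_eq_norm, norm_sub_sq_real, ha, hb]
  ring

variable {t : Finset V} {δ : ℝ}

open Classical in
theorem real_inner_eq_add_ite_of_equidistant (hnorm : ∀ a ∈ t, ‖a‖ = 1)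
    (hdist : (t : Set V).Pairwise fun a b => dist a b = δ) {a b : V} (ha : a ∈ t) (hb : b ∈ t) :
    ⟪b, a⟫ = (1 - δ ^ 2 / 2) + if b = a then δ ^ 2 / 2 else 0 := by
  rw [real_inner_eq_one_sub_dist_sq_div_two (hnorm b hb) (hnorm a ha)]
  split_ifs with h
  · simp [h]
  · rw [hdist hb ha h, add_zero]

theorem inner_sum_of_equidistant (hnorm : ∀ a ∈ t, ‖a‖ = 1)
    (hdist : (t : Set V).Pairwise fun a b => dist a b = δ) {a : V} (ha : a ∈ t) :
    ⟪∑ b ∈ t, b, a⟫ = t.card * (1 - δ ^ 2 / 2) + δ ^ 2 / 2 := by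
  classical
  rw [sum_inner, Finset.sum_congr rfl fun b hb =>
    real_inner_eq_add_ite_of_equidistant hnorm hdist ha hb]
  rw [Finset.sum_add_distrib, Finset.sum_const, Finset.sum_ite_eq_of_mem' t a _ ha, nsmul_eq_mul]

theorem sum_eq_zero_of_equidistant (hnorm : ∀ a ∈ t, ‖a‖ = 1)
    (hdist : (t : Set V).Pairwise fun a b => dist a b = δ)
    (hspan : affineSpan ℝ (t : Set V) = ⊤) : ∑ b ∈ t, b = 0 :=
  eq_zero_of_inner_eq_const hspan fun _ ha => inner_sum_of_equidistant hnorm hdist ha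

theorem ne_zero_of_equidistant (hnorm : ∀ a ∈ t, ‖a‖ = 1)
    (hdist : (t : Set V).Pairwise fun a b => dist a b = δ)
    (hspan : affineSpan ℝ (t : Set V) = ⊤) : δ ≠ 0 := by
  rintro rfl
  obtain ⟨a, ha⟩ : t.Nonempty := AffineSubspace.nonempty_of_affineSpan_eq_top ℝ V V hspan
  have h := inner_sum_of_equidistant hnorm hdist ha
  rw [sum_eq_zero_of_equidistant hnorm hdist hspan] at h
  have hcard : (0 : ℝ) < t.card := mod_cast Finset.card_pos.2 ⟨a, ha⟩
  simp only [inner_zero_left] at h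
  linarith

theorem sum_rankOne_of_equidistant (hnorm : ∀ a ∈ t, ‖a‖ = 1)
    (hdist : (t : Set V).Pairwise fun a b => dist a b = δ)
    (hspan : affineSpan ℝ (t : Set V) = ⊤) :
    ∑ b ∈ t, rankOne ℝ b b = (δ ^ 2 / 2) • ContinuousLinearMap.id ℝ V := by
  classical
  have hvertex (a : V) (ha : a ∈ t) : ∑ b ∈ t, ⟪b, a⟫ • b = (δ ^ 2 / 2) • a := by
    rw [Finset.sum_congr rfl fun b hb => by
      rw [real_inner_eq_add_ite_of_equidistant hnorm hdist ha hb]]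
    simp_rw [add_smul, Finset.sum_add_distrib, ite_smul, zero_smul]
    rw [← Finset.smul_sum, sum_eq_zero_of_equidistant hnorm hdist hspan, smul_zero, zero_add,
      Finset.sum_ite_eq_of_mem' t a _ ha]
  ext x
  have haffine : (∑ b ∈ t, rankOne ℝ b b).toLinearMap.toAffineMap =
      ((δ ^ 2 / 2) • ContinuousLinearMap.id ℝ V).toLinearMap.toAffineMap :=
    AffineMap.ext_on hspan fun a ha => by simpa using hvertex a ha
  exact congr($haffine x)

theorem isJohnDecomposition_of_equidistant (hnorm : ∀ a ∈ t, ‖a‖ = 1)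
    (hdist : (t : Set V).Pairwise fun a b => dist a b = δ)
    (hspan : affineSpan ℝ (t : Set V) = ⊤) :
    IsJohnDecomposition t fun _ => (δ ^ 2 / 2)⁻¹ where
  weight_nonneg _ _ := by positivity
  norm_eq_one := hnorm
  sum_smul_eq_zero := by
    rw [← Finset.smul_sum, sum_eq_zero_of_equidistant hnorm hdist hspan, smul_zero]
  sum_smul_rankOne := by
    have hδ := ne_zero_of_equidistant hnorm hdist hspan
    rw [← Finset.smul_sum, sum_rankOne_of_equidistant hnorm hdist hspan,
      inv_smul_smul₀ (by positivity)]

end RegularSimplex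

theorem addHaar_image_affineMap {V : Type*} [NormedAddCommGroup V] [NormedSpace ℝ V]
    [MeasurableSpace V] [BorelSpace V] [FiniteDimensional ℝ V] (μ : Measure V)
    [μ.IsAddHaarMeasure] (G : V →ᵃ[ℝ] V) (s : Set V) :
    μ (G '' s) = ENNReal.ofReal |G.linear.det| * μ s := by
  have himage : G '' s = (fun x => x + G 0) '' (G.linear '' s) := by
    rw [Set.image_image]
    exact Set.image_congr fun x _ => congr_fun G.decomp x
  rw [himage, Set.image_add_right, measure_preimage_add_right, Measure.addHaar_image_linearMap]

theorem stmt_9_general {V : Type*} [NormedAddCommGroup V] [InnerProductSpace ℝ V]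
    [FiniteDimensional ℝ V] [MeasurableSpace V] [BorelSpace V] (μ : Measure V)
    [μ.IsAddHaarMeasure] {t : Finset V} {w : V → ℝ} (ht : IsJohnDecomposition t w)
    (F : V ≃ᵃ[ℝ] V) (htF : (t : Set V) ⊆ F '' closedBall 0 1) :
    μ (closedBall 0 1) ≤ μ (F '' closedBall 0 1) ∧
      (μ (F '' closedBall 0 1) = μ (closedBall 0 1) ↔
        F '' closedBall 0 1 = closedBall (0 : V) 1) := by
  set E := F '' closedBall 0 1 with hE
  have hpre : E = F.symm ⁻¹' closedBall 0 1 := F.toEquiv.image_eq_preimage_symm _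
  have hmaps : MapsTo (F.symm : V →ᵃ[ℝ] V) t (closedBall 0 1) :=
    htF.trans hpre.subset
  have hvol : μ (closedBall 0 1) = ENNReal.ofReal |(F.symm : V →ᵃ[ℝ] V).linear.det| * μ E := by
    rw [← addHaar_image_affineMap, hE, Set.image_image]
    simp
  refine ⟨?_, fun heq => ?_, fun heq => by rw [heq]⟩
  · rw [hvol]
    exact mul_le_of_le_one_left' (ENNReal.ofReal_le_one.2 (ht.abs_det_linear_le_one hmaps))
  · have hdet : |(F.symm : V →ᵃ[ℝ] V).linear.det| = 1 := by
      rwa [heq, eq_comm, ENNReal.mul_eq_right (measure_closedBall_pos _ _ one_pos).ne'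
        measure_closedBall_lt_top.ne, ENNReal.ofReal_eq_one] at hvol
    ext x
    have hx := ht.norm_apply_eq_norm_of_abs_det_linear_eq_one hmaps hdet x
    rw [hpre, mem_preimage, mem_closedBall_zero_iff, mem_closedBall_zero_iff, ← hx]
    rfl

theorem stmt_9 {d : ℕ} (hd : 1 ≤ d) (S : Set (Euc d))
    (hcard : S.ncard = d + 1) (hnorm : ∀ a ∈ S, ‖a‖ = 1)
    (hequi : ∃ δ : ℝ, ∀ a ∈ S, ∀ b ∈ S, a ≠ b → dist a b = δ)
    (hspan : affineSpan ℝ S = ⊤) :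
    ∀ E : Set (Euc d), IsEllipsoid E → S ⊆ E →
      volume (closedBall (0 : Euc d) 1) ≤ volume E ∧
      (volume E = volume (closedBall (0 : Euc d) 1) ↔ E = closedBall (0 : Euc d) 1) := by
  obtain ⟨δ, hδ⟩ := hequi
  lift S to Finset (Euc d) using Set.finite_of_ncard_pos (by lia)
  rintro _ ⟨F, rfl⟩ hSF
  exact stmt_9_general volume (isJohnDecomposition_of_equidistant hnorm hδ hspan) F hSF
end
end
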